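/- For every z ∈ ℝ, P(W̄ ≤ z) − Φ(z) = Σᵢ₌₁ⁿ E[ξᵢ² 1{ξᵢ > 1}] · E[f_z′(W̄)] + Σᵢ₌₁ⁿ ∫_{−∞}^1 E[f_z′(W̄⁽ⁱ⁾ + x̄ᵢ) − f_z′(W̄⁽ⁱ⁾ + t)] K̄ᵢ(t) dt + Σᵢ₌₁ⁿ E[ξᵢ 1{ξᵢ > 1}] · E[f_z(W̄⁽ⁱ⁾)]. -/

import Mathlib

open MeasureTheory ProbabilityTheory Real

/-- The standard normal cumulative distribution function. -/
noncomputable def Phi (z : ℝ) : ℝ :=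
  (Real.sqrt (2 * Real.pi))⁻¹ * ∫ u in Set.Iic z, Real.exp (-u ^ 2 / 2)

/-- The bounded solution `f_z` of the Stein equation
`f'(w) - w f(w) = 1{w ≤ z} - Φ(z)`. -/
noncomputable def fz (z w : ℝ) : ℝ :=
  if w ≤ z then Real.sqrt (2 * Real.pi) * Real.exp (w ^ 2 / 2) * Phi w * (1 - Phi z)
  else Real.sqrt (2 * Real.pi) * Real.exp (w ^ 2 / 2) * Phi z * (1 - Phi w)

/-- The derivative `f_z'`, expressed via the Stein equation. -/
noncomputable def fz' (z w : ℝ) : ℝ :=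
  w * fz z w + (if w ≤ z then 1 else 0) - Phi z

/-- The truncation `x̄ᵢ = ξᵢ 1{ξᵢ ≤ 1}`. -/
noncomputable def xbar {Ω : Type*} {n : ℕ} (ξ : Fin n → Ω → ℝ) (i : Fin n) (ω : Ω) : ℝ :=
  if ξ i ω ≤ 1 then ξ i ω else 0

/-- `W̄ = ∑ᵢ x̄ᵢ`. -/
noncomputable def Wbar {Ω : Type*} {n : ℕ} (ξ : Fin n → Ω → ℝ) (ω : Ω) : ℝ :=
  ∑ i, xbar ξ i ω

/-- `W̄⁽ⁱ⁾ = W̄ - x̄ᵢ`. -/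
noncomputable def Wbari {Ω : Type*} {n : ℕ} (ξ : Fin n → Ω → ℝ) (i : Fin n) (ω : Ω) : ℝ :=
  Wbar ξ ω - xbar ξ i ω

/-- `K̄ᵢ(t) = E[x̄ᵢ (1{0 ≤ t ≤ x̄ᵢ} - 1{x̄ᵢ ≤ t < 0})]`. -/
noncomputable def Kbar {Ω : Type*} [MeasureSpace Ω] {n : ℕ} (ξ : Fin n → Ω → ℝ)
    (i : Fin n) (t : ℝ) : ℝ :=
  ∫ ω, xbar ξ i ω * ((if 0 ≤ t ∧ t ≤ xbar ξ i ω then (1 : ℝ) else 0)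
    - (if xbar ξ i ω ≤ t ∧ t < 0 then (1 : ℝ) else 0))

/-- `β₂ = ∑ᵢ E[ξᵢ² 1{|ξᵢ| > 1}]`. -/
noncomputable def beta2 {Ω : Type*} [MeasureSpace Ω] {n : ℕ} (ξ : Fin n → Ω → ℝ) : ℝ :=
  ∑ i, ∫ ω, (if 1 < |ξ i ω| then (ξ i ω) ^ 2 else 0)

/-- `β₃ = ∑ᵢ E[|ξᵢ|³ 1{|ξᵢ| ≤ 1}]`. -/
noncomputable def beta3 {Ω : Type*} [MeasureSpace Ω] {n : ℕ} (ξ : Fin n → Ω → ℝ) : ℝ :=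
  ∑ i, ∫ ω, (if |ξ i ω| ≤ 1 then |ξ i ω| ^ 3 else 0)

open Filter Topology in
lemma aux_gauss_integrable : Integrable (fun u : ℝ => Real.exp (-u ^ 2 / 2)) := by
  have := integrable_exp_neg_mul_sq (b := 1/2) (by norm_num)
  refine this.congr (ae_of_all _ fun x => ?_)
  show Real.exp _ = Real.exp _
  congr 1; ring

lemma aux_gauss_integral : ∫ u : ℝ, Real.exp (-u ^ 2 / 2) = Real.sqrt (2 * Real.pi) := by
  have := integral_gaussian (1/2)
  rw [show (2 * Real.pi) = Real.pi / (1/2) by ring, ← this]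
  congr 1; ext x; congr 1; ring

lemma aux_sqrt_pos : 0 < Real.sqrt (2 * Real.pi) := Real.sqrt_pos.mpr (by positivity)

lemma aux_one_sub_Phi (z : ℝ) :
    1 - Phi z = (Real.sqrt (2 * Real.pi))⁻¹ * ∫ u in Set.Ioi z, Real.exp (-u ^ 2 / 2) := by
  have h := intervalIntegral.integral_Iic_add_Ioi (b := z) (μ := volume)
    aux_gauss_integrable.integrableOn aux_gauss_integrable.integrableOn
  rw [aux_gauss_integral] at h
  have h0 := aux_sqrt_pos
  unfold Phi
  rw [eq_sub_of_add_eq' h]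
  field_simp

lemma aux_Phi_nonneg (z : ℝ) : 0 ≤ Phi z := by
  unfold Phi
  have := aux_sqrt_pos
  exact mul_nonneg (by positivity) (integral_nonneg fun x => (Real.exp_pos _).le)

lemma aux_Phi_le_one (z : ℝ) : Phi z ≤ 1 := by
  have h : 0 ≤ 1 - Phi z := by
    rw [aux_one_sub_Phi]
    have := aux_sqrt_pos
    exact mul_nonneg (by positivity) (integral_nonneg fun x => (Real.exp_pos _).le)
  linarith

lemma aux_Phi_deriv (w : ℝ) :
    HasDerivAt Phi ((Real.sqrt (2 * Real.pi))⁻¹ * Real.exp (-w ^ 2 / 2)) w := by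
  have hc : Continuous (fun u : ℝ => Real.exp (-u ^ 2 / 2)) := by fun_prop
  have h1 : HasDerivAt (fun w => ∫ u in (0:ℝ)..w, Real.exp (-u ^ 2 / 2))
      (Real.exp (-w ^ 2 / 2)) w :=
    intervalIntegral.integral_hasDerivAt_right (hc.intervalIntegrable _ _)
      (hc.stronglyMeasurableAtFilter _ _) hc.continuousAt
  have h2 := ((h1.add_const (∫ u in Set.Iic (0:ℝ), Real.exp (-u ^ 2 / 2))).const_mul
    (Real.sqrt (2 * Real.pi))⁻¹)
  refine h2.congr_of_eventuallyEq (Filter.Eventually.of_forall fun y => ?_)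
  have := intervalIntegral.integral_Iic_sub_Iic (a := 0) (b := y) (μ := volume)
    aux_gauss_integrable.integrableOn aux_gauss_integrable.integrableOn
  show Phi y = _
  simp only [Phi]
  rw [← this]
  ring

lemma aux_Phi_cont : Continuous Phi :=
  continuous_iff_continuousAt.mpr fun w => (aux_Phi_deriv w).continuousAt

open Filter Topology in
lemma aux_mills (w : ℝ) (hw : 0 < w) :
    w * ∫ u in Set.Ioi w, Real.exp (-u ^ 2 / 2) ≤ Real.exp (-w ^ 2 / 2) := by
  have hd : ∀ x ∈ Set.Ici w, HasDerivAt (fun u : ℝ => -Real.exp (-u ^ 2 / 2))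
      (x * Real.exp (-x ^ 2 / 2)) x := by
    intro x _
    have := ((((hasDerivAt_id x).pow 2).neg.div_const 2).exp).neg
    simp only [id] at this
    convert! this using 1
    simp; ring
  have ht : Tendsto (fun u : ℝ => -Real.exp (-u ^ 2 / 2)) atTop (𝓝 0) := by
    have h1 : Tendsto (fun u : ℝ => -u ^ 2 / 2) atTop atBot := by
      have : Tendsto (fun u : ℝ => u ^ 2 * (1/2)) atTop atTop :=
        (tendsto_pow_atTop (by norm_num)).atTop_mul_const (by norm_num)
      refine (tendsto_neg_atTop_atBot.comp this).congr fun x => ?_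
      simp; ring
    simpa using (Real.tendsto_exp_atBot.comp h1).neg
  have hi : IntegrableOn (fun x : ℝ => x * Real.exp (-x ^ 2 / 2)) (Set.Ioi w) :=
    integrableOn_Ioi_deriv_of_nonneg' hd
      (fun x hx => mul_nonneg (hw.le.trans (le_of_lt hx)) (Real.exp_pos _).le) ht
  have he := integral_Ioi_of_hasDerivAt_of_tendsto' hd hi ht
  rw [← integral_const_mul]
  calc _ ≤ ∫ x in Set.Ioi w, x * Real.exp (-x ^ 2 / 2) := by
        refine setIntegral_mono_on (aux_gauss_integrable.integrableOn.const_mul w) hi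
          measurableSet_Ioi fun x hx => ?_
        exact mul_le_mul_of_nonneg_right (le_of_lt hx) (Real.exp_pos _).le
    _ = _ := by rw [he]; ring

lemma aux_Phi_neg (w : ℝ) : Phi (-w) = 1 - Phi w := by
  rw [aux_one_sub_Phi]
  unfold Phi
  have := integral_comp_neg_Iic (-w) (fun u : ℝ => Real.exp (-u ^ 2 / 2))
  simp only [neg_neg, even_two.neg_pow] at this
  rw [this]

/-- Mills bound -/
lemma aux_mills' (w : ℝ) (hw : 0 < w) :
    w * (Real.sqrt (2 * Real.pi) * Real.exp (w ^ 2 / 2) * (1 - Phi w)) ≤ 1 := by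
  rw [aux_one_sub_Phi]
  have h0 := aux_sqrt_pos
  have h := aux_mills w hw
  have h2 := mul_le_mul_of_nonneg_left h (Real.exp_pos (w ^ 2 / 2)).le
  rw [← Real.exp_add, show w ^ 2 / 2 + -w ^ 2 / 2 = 0 by ring, Real.exp_zero] at h2
  refine le_trans (le_of_eq ?_) h2
  field_simp

lemma aux_fz_nonneg (z w : ℝ) : 0 ≤ fz z w := by
  have h0 := aux_sqrt_pos
  have h1 := aux_Phi_nonneg z
  have h2 := aux_Phi_nonneg w
  have h3 : 0 ≤ 1 - Phi z := by linarith [aux_Phi_le_one z]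
  have h4 : 0 ≤ 1 - Phi w := by linarith [aux_Phi_le_one w]
  unfold fz
  split_ifs <;> positivity

lemma aux_fz_cont (z : ℝ) : Continuous (fz z) := by
  have := aux_Phi_cont
  unfold fz
  refine Continuous.if_le (by fun_prop) (by fun_prop) continuous_id continuous_const ?_
  rintro x rfl
  ring

lemma aux_wfz_far (z w : ℝ) (hw : |z| < |w|) : |w * fz z w| ≤ 1 := by
  have h0 := aux_sqrt_pos
  rw [abs_mul, abs_of_nonneg (aux_fz_nonneg z w)]
  have hz1 := aux_Phi_nonneg z
  have hz2 := aux_Phi_le_one z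
  rcases lt_or_ge 0 w with hp | hn
  · rw [abs_of_pos hp] at *
    have : ¬ w ≤ z := by have := le_abs_self z; linarith
    rw [fz, if_neg this]
    have h1 := aux_mills' w hp
    calc _ = Phi z * (w * (Real.sqrt (2 * Real.pi) * Real.exp (w ^ 2 / 2) * (1 - Phi w))) := by ring
      _ ≤ Phi z * 1 := mul_le_mul_of_nonneg_left h1 hz1
      _ ≤ 1 := by linarith
  · rw [abs_of_nonpos hn] at *
    have : w ≤ z := by have := neg_abs_le z; linarith
    rw [fz, if_pos this]
    have h1 := aux_mills' (-w) (by have := abs_nonneg z; linarith)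
    rw [← aux_Phi_neg, neg_neg, even_two.neg_pow] at h1
    calc _ = (1 - Phi z) * (-w * (Real.sqrt (2 * Real.pi) * Real.exp (w ^ 2 / 2) * (Phi w))) := by
          ring
      _ ≤ (1 - Phi z) * 1 := mul_le_mul_of_nonneg_left h1 (by linarith)
      _ ≤ 1 := by linarith

lemma aux_fz_bdd (z : ℝ) : ∃ C, ∀ w, |fz z w| ≤ C ∧ |w * fz z w| ≤ C := by
  have hc := aux_fz_cont z
  obtain ⟨C1, h1⟩ := (isCompact_Icc (a := -(|z| + 1)) (b := |z| + 1)).exists_bound_of_continuousOn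
    (f := fz z) hc.continuousOn
  obtain ⟨C2, h2⟩ := (isCompact_Icc (a := -(|z| + 1)) (b := |z| + 1)).exists_bound_of_continuousOn
    (f := fun w => w * fz z w) (by fun_prop)
  refine ⟨max 1 (max C1 C2), fun w => ?_⟩
  by_cases hw : |w| ≤ |z| + 1
  · have hm := abs_le.mp hw
    exact ⟨(h1 w hm).trans (by simp), (h2 w hm).trans (by simp)⟩
  · push Not at hw
    have h3 := aux_wfz_far z w (by linarith)
    refine ⟨le_trans ?_ (le_max_left _ _), h3.trans (le_max_left _ _)⟩
    rw [abs_mul] at h3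
    have := abs_nonneg z
    nlinarith [abs_nonneg (fz z w)]

lemma aux_fz'_bdd (z : ℝ) : ∃ C, ∀ w, |fz' z w| ≤ C := by
  obtain ⟨C, hC⟩ := aux_fz_bdd z
  refine ⟨C + 1, fun w => ?_⟩
  have h := abs_le.mp (hC w).2
  have hz1 := aux_Phi_nonneg z
  have hz2 := aux_Phi_le_one z
  unfold fz'
  rw [abs_le]
  split_ifs <;> constructor <;> linarith

lemma aux_fz'_meas (z : ℝ) : Measurable (fz' z) := by
  have h1 := (aux_fz_cont z).measurable
  unfold fz'
  exact ((measurable_id.mul h1).add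
    (Measurable.ite measurableSet_Iic measurable_const measurable_const)).sub_const _

lemma aux_fz_deriv (z w : ℝ) (h : w ≠ z) : HasDerivAt (fz z) (fz' z w) w := by
  have h0 := aux_sqrt_pos
  have hP := aux_Phi_deriv w
  have hE : HasDerivAt (fun w : ℝ => Real.exp (w ^ 2 / 2)) (w * Real.exp (w ^ 2 / 2)) w := by
    have := ((((hasDerivAt_id w).pow 2).div_const 2).exp)
    simp only [id] at this
    convert! this using 1
    simp; ring
  have hee : Real.exp (-w ^ 2 / 2) * Real.exp (w ^ 2 / 2) = 1 := by
    rw [← Real.exp_add, show -w ^ 2 / 2 + w ^ 2 / 2 = 0 by ring, Real.exp_zero]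
  have hss : Real.sqrt (2 * Real.pi) * (Real.sqrt (2 * Real.pi))⁻¹ = 1 :=
    mul_inv_cancel₀ h0.ne'
  have hmul : (Real.sqrt (2 * Real.pi) * (Real.sqrt (2 * Real.pi))⁻¹) *
      (Real.exp (-w ^ 2 / 2) * Real.exp (w ^ 2 / 2)) = 1 := by rw [hss, hee, one_mul]
  rcases lt_or_gt_of_ne h with hl | hg
  · have h3 := ((hE.const_mul (Real.sqrt (2 * Real.pi))).mul hP).mul_const (1 - Phi z)
    have h4 : fz z =ᶠ[nhds w] fun w =>
        Real.sqrt (2 * Real.pi) * Real.exp (w ^ 2 / 2) * Phi w * (1 - Phi z) := by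
      filter_upwards [Iio_mem_nhds hl] with y hy
      rw [fz, if_pos (le_of_lt hy)]
    convert! h3.congr_of_eventuallyEq h4 using 1
    rw [fz', fz, if_pos hl.le, if_pos hl.le]
    linear_combination (-(1 - Phi z)) * hmul
  · have h3 := ((hE.const_mul (Real.sqrt (2 * Real.pi))).mul_const (Phi z)).mul (hP.const_sub 1)
    have h4 : fz z =ᶠ[nhds w] fun w =>
        Real.sqrt (2 * Real.pi) * Real.exp (w ^ 2 / 2) * Phi z * (1 - Phi w) := by
      filter_upwards [Ioi_mem_nhds hg] with y hy
      rw [fz, if_neg (not_le.mpr hy)]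
    convert! h3.congr_of_eventuallyEq h4 using 1
    rw [fz', fz, if_neg (not_le.mpr hg), if_neg (not_le.mpr hg)]
    linear_combination (Phi z) * hmul

lemma aux_fz_ftc (z v x : ℝ) : ∫ t in (0:ℝ)..x, fz' z (v + t) = fz z (v + x) - fz z v := by
  have hc := aux_fz_cont z
  obtain ⟨C, hC⟩ := aux_fz'_bdd z
  have hm := aux_fz'_meas z
  have := MeasureTheory.integral_eq_of_hasDerivAt_off_countable (fun t => fz z (v + t))
    (fun t => fz' z (v + t)) (a := 0) (b := x) (s := {z - v}) (Set.countable_singleton _)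
    (by fun_prop) ?_ ?_
  · simpa using this
  · rintro t ⟨_, ht⟩
    have h := aux_fz_deriv z (v + t) (fun h => ht (by simp; linarith))
    exact h.comp_const_add v t
  · rw [intervalIntegrable_iff]
    refine IntegrableOn.of_bound (by simp) (hm.comp (measurable_const_add v)).aestronglyMeasurable C (ae_of_all _ fun t => hC _)

/-- the kernel -/
noncomputable def auxk (x t : ℝ) : ℝ :=
  x * ((if 0 ≤ t ∧ t ≤ x then (1 : ℝ) else 0) - (if x ≤ t ∧ t < 0 then (1 : ℝ) else 0))

lemma auxk_pos {x : ℝ} (hx : 0 ≤ x) (h : ℝ → ℝ) :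
    (fun t => h t * auxk x t) = (Set.Icc 0 x).indicator (fun t => x * h t) := by
  ext t
  have : ¬ (x ≤ t ∧ t < 0) := by rintro ⟨a, b⟩; linarith
  simp only [auxk, if_neg this, Set.indicator, Set.mem_Icc]
  split_ifs <;> ring

lemma auxk_neg {x : ℝ} (hx : x < 0) (h : ℝ → ℝ) :
    (fun t => h t * auxk x t) = (Set.Ico x 0).indicator (fun t => -x * h t) := by
  ext t
  have : ¬ (0 ≤ t ∧ t ≤ x) := by rintro ⟨a, b⟩; linarith
  simp only [auxk, if_neg this, Set.indicator, Set.mem_Ico]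
  split_ifs <;> ring

lemma auxk_integral (x : ℝ) (h : ℝ → ℝ) :
    ∫ t, h t * auxk x t = x * ∫ t in (0:ℝ)..x, h t := by
  rcases le_or_gt 0 x with hx | hx
  · rw [auxk_pos hx, integral_indicator measurableSet_Icc, integral_Icc_eq_integral_Ioc,
      integral_const_mul, intervalIntegral.integral_of_le hx]
  · rw [auxk_neg hx, integral_indicator measurableSet_Ico, integral_Ico_eq_integral_Ioc,
      integral_const_mul, intervalIntegral.integral_of_ge hx.le]
    ring

lemma auxk_nonneg (x t : ℝ) : 0 ≤ auxk x t := by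
  rcases le_or_gt 0 x with hx | hx
  · have := congrFun (auxk_pos hx (fun _ => 1)) t
    simp only [one_mul] at this
    rw [this]; exact Set.indicator_nonneg (fun _ _ => by simpa) _
  · have := congrFun (auxk_neg hx (fun _ => 1)) t
    simp only [one_mul] at this
    rw [this]; exact Set.indicator_nonneg (fun _ _ => by simp; linarith) _

lemma auxk_integrable (x : ℝ) : Integrable (auxk x) := by
  have key : Integrable (fun t => (1:ℝ) * auxk x t) := by
    rcases le_or_gt 0 x with hx | hx
    · rw [auxk_pos hx (fun _ => 1), integrable_indicator_iff measurableSet_Icc]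
      exact integrableOn_const (by simp)
    · rw [auxk_neg hx (fun _ => 1), integrable_indicator_iff measurableSet_Ico]
      exact integrableOn_const (by simp)
  simpa using key

lemma auxk_integral_one (x : ℝ) : ∫ t, auxk x t = x ^ 2 := by
  have := auxk_integral x (fun _ => 1)
  simp at this
  rw [this]; ring

lemma auxk_zero {x t : ℝ} (hx : x ≤ 1) (ht : t ∉ Set.Iic (1:ℝ)) : auxk x t = 0 := by
  have h : (1:ℝ) < t := by simpa using ht
  have h1 : ¬ (0 ≤ t ∧ t ≤ x) := by rintro ⟨a, b⟩; linarith
  have h2 : ¬ (x ≤ t ∧ t < 0) := by rintro ⟨a, b⟩; linarith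
  simp [auxk, h1, h2]

lemma auxk_meas : Measurable (fun p : ℝ × ℝ => auxk p.1 p.2) := by
  unfold auxk
  refine measurable_fst.mul (Measurable.sub ?_ ?_)
  · refine Measurable.ite ?_ measurable_const measurable_const
    exact (measurableSet_le measurable_const measurable_snd).inter
      (measurableSet_le measurable_snd measurable_fst)
  · refine Measurable.ite ?_ measurable_const measurable_const
    exact (measurableSet_le measurable_fst measurable_snd).inter
      (measurableSet_lt measurable_snd measurable_const)

lemma auxk_prod {Ω : Type*} [MeasurableSpace Ω] (μ : Measure Ω) [IsProbabilityMeasure μ]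
    (X : Ω → ℝ) (hX : Measurable X) (hX2 : Integrable (fun ω => X ω ^ 2) μ) :
    Integrable (fun p : Ω × ℝ => auxk (X p.1) p.2) (μ.prod volume) := by
  have hm : Measurable (fun p : Ω × ℝ => auxk (X p.1) p.2) :=
    auxk_meas.comp ((hX.comp measurable_fst).prodMk measurable_snd)
  rw [integrable_prod_iff hm.aestronglyMeasurable]
  refine ⟨ae_of_all _ fun ω => auxk_integrable (X ω), ?_⟩
  simp only [Real.norm_eq_abs, abs_of_nonneg (auxk_nonneg _ _), auxk_integral_one]
  exact hX2

lemma aux_R2 {Ω : Type*} [MeasurableSpace Ω] (μ : Measure Ω) [IsProbabilityMeasure μ]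
    (X V : Ω → ℝ) (hX : Measurable X) (hV : Measurable V) (hXV : IndepFun X V μ)
    (hX1 : ∀ ω, X ω ≤ 1) (hX2 : Integrable (fun ω => X ω ^ 2) μ) (z : ℝ) :
    ∫ t in Set.Iic (1:ℝ), (∫ ω, (fz' z (V ω + X ω) - fz' z (V ω + t)) ∂μ)
        * (∫ ω, auxk (X ω) t ∂μ)
      = (∫ ω, fz' z (V ω + X ω) ∂μ) * (∫ ω, X ω ^ 2 ∂μ)
        - ∫ ω, X ω * (fz z (V ω + X ω) - fz z (V ω)) ∂μ := by
  obtain ⟨C, hC⟩ := aux_fz'_bdd z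
  have hf' := aux_fz'_meas z
  have hk := auxk_prod μ X hX hX2
  have hint : ∀ g : Ω → ℝ, Measurable g → Integrable (fun ω => fz' z (g ω)) μ := fun g hg =>
    Integrable.of_bound (hf'.comp hg).aestronglyMeasurable C (ae_of_all _ fun ω => hC _)
  have hfk : Integrable (fun p : Ω × ℝ => fz' z (V p.1 + p.2) * auxk (X p.1) p.2)
      (μ.prod volume) := by
    refine hk.bdd_mul (c := C) ?_ (ae_of_all _ fun p => hC _)
    exact (hf'.comp ((hV.comp measurable_fst).add measurable_snd)).aestronglyMeasurable
  have hind : ∀ t, ∫ ω, fz' z (V ω + t) * auxk (X ω) t ∂μ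
      = (∫ ω, fz' z (V ω + t) ∂μ) * ∫ ω, auxk (X ω) t ∂μ := by
    intro t
    have hm1 : Measurable (fun v : ℝ => fz' z (v + t)) := hf'.comp (measurable_add_const t)
    have hm2 : Measurable (fun x : ℝ => auxk x t) :=
      auxk_meas.comp (measurable_id.prodMk measurable_const)
    exact (hXV.symm.comp hm1 hm2).integral_fun_mul_eq_mul_integral
      (hm1.comp hV).aestronglyMeasurable (hm2.comp hX).aestronglyMeasurable
  have hI1 : Integrable (fun t => ∫ ω, auxk (X ω) t ∂μ) := hk.integral_prod_right
  have hI2 : Integrable (fun t => (∫ ω, fz' z (V ω + t) ∂μ) * ∫ ω, auxk (X ω) t ∂μ) := by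
    have := hfk.integral_prod_right
    simpa only [hind] using this
  rw [setIntegral_eq_integral_of_forall_compl_eq_zero]
  swap
  · intro t ht
    simp [auxk_zero (hX1 _) ht]
  have e1 : ∀ t, (∫ ω, (fz' z (V ω + X ω) - fz' z (V ω + t)) ∂μ) * (∫ ω, auxk (X ω) t ∂μ)
      = (∫ ω, fz' z (V ω + X ω) ∂μ) * (∫ ω, auxk (X ω) t ∂μ)
        - (∫ ω, fz' z (V ω + t) ∂μ) * ∫ ω, auxk (X ω) t ∂μ := by
    intro t
    rw [integral_sub (hint (fun ω => V ω + X ω) (hV.add hX)) (hint (fun ω => V ω + t) (hV.add_const t)), sub_mul]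
  simp_rw [e1]
  rw [integral_sub (hI1.const_mul _) hI2, integral_const_mul]
  congr 1
  · congr 1
    rw [← integral_integral_swap (f := fun ω t => auxk (X ω) t) hk]
    simp_rw [auxk_integral_one]
  · simp_rw [← hind]
    rw [← integral_integral_swap (f := fun ω t => fz' z (V ω + t) * auxk (X ω) t) hfk]
    congr 1; ext ω
    rw [auxk_integral (X ω) (fun t => fz' z (V ω + t)), aux_fz_ftc]

/-- Decomposition of P(Wbar <= z) - Phi(z) into R1 + R2 + R3. -/
theorem stein_decomposition
    {Ω : Type*} [MeasureSpace Ω] [IsProbabilityMeasure (ℙ : Measure Ω)]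
    {n : ℕ} (ξ : Fin n → Ω → ℝ)
    (hmeas : ∀ i, Measurable (ξ i))
    (hindep : iIndepFun ξ ℙ)
    (hL2 : ∀ i, MemLp (ξ i) 2 ℙ)
    (hmean : ∀ i, ∫ ω, ξ i ω = 0)
    (hvar : ∑ i, ∫ ω, (ξ i ω) ^ 2 = 1)
    (z : ℝ) :
    (ℙ {ω | Wbar ξ ω ≤ z}).toReal - Phi z
      = (∑ i, ∫ ω, (if 1 < ξ i ω then (ξ i ω) ^ 2 else 0)) * (∫ ω, fz' z (Wbar ξ ω))
        + (∑ i, ∫ t in Set.Iic (1 : ℝ),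
            (∫ ω, (fz' z (Wbari ξ i ω + xbar ξ i ω) - fz' z (Wbari ξ i ω + t))) * Kbar ξ i t)
        + ∑ i, (∫ ω, (if 1 < ξ i ω then ξ i ω else 0)) * (∫ ω, fz z (Wbari ξ i ω)) := by
  have hxm : ∀ i, Measurable (xbar ξ i) := fun i =>
    Measurable.ite (measurableSet_le (hmeas i) measurable_const) (hmeas i) measurable_const
  have hWm : Measurable (Wbar ξ) := by
    unfold Wbar
    exact Finset.measurable_sum _ fun i _ => hxm i
  have hWim : ∀ i, Measurable (Wbari ξ i) := fun i => hWm.sub (hxm i)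
  have hadd : ∀ i ω, Wbari ξ i ω + xbar ξ i ω = Wbar ξ ω := fun i ω => by simp [Wbari]
  have hx1 : ∀ i ω, xbar ξ i ω ≤ 1 := by
    intro i ω; unfold xbar; split_ifs with h
    · exact h
    · norm_num
  have hsq : ∀ i, Integrable (fun ω => ξ i ω ^ 2) := fun i => (hL2 i).integrable_sq
  have hI : ∀ i, Integrable (ξ i) := fun i => (hL2 i).integrable (by norm_num)
  have hxI : ∀ i, Integrable (xbar ξ i) := fun i =>
    (hI i).mono (hxm i).aestronglyMeasurable (ae_of_all _ fun ω => by
      unfold xbar; split_ifs <;> simp)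
  have hxsq : ∀ i, Integrable (fun ω => xbar ξ i ω ^ 2) := fun i =>
    (hsq i).mono ((hxm i).pow_const 2).aestronglyMeasurable (ae_of_all _ fun ω => by
      unfold xbar; split_ifs <;> simp [sq_nonneg])
  have hmean' : ∀ i, ∫ ω, (if 1 < ξ i ω then ξ i ω else 0) = - ∫ ω, xbar ξ i ω := by
    intro i
    have : (fun ω => if 1 < ξ i ω then ξ i ω else 0) = fun ω => ξ i ω - xbar ξ i ω := by
      ext ω; unfold xbar
      by_cases h : ξ i ω ≤ 1
      · simp [h, not_lt.mpr h]
      · simp [h, not_le.mp h]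
    rw [this, integral_sub (hI i) (hxI i), hmean i, zero_sub]
  have hvar' : ∀ i, ∫ ω, (if 1 < ξ i ω then ξ i ω ^ 2 else 0)
      = (∫ ω, ξ i ω ^ 2) - ∫ ω, xbar ξ i ω ^ 2 := by
    intro i
    have : (fun ω => if 1 < ξ i ω then ξ i ω ^ 2 else 0)
        = fun ω => ξ i ω ^ 2 - xbar ξ i ω ^ 2 := by
      ext ω; unfold xbar
      by_cases h : ξ i ω ≤ 1
      · simp [h, not_lt.mpr h]
      · simp [h, not_le.mp h]
    rw [this, integral_sub (hsq i) (hxsq i)]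
  have hxind : iIndepFun (xbar ξ) ℙ :=
    hindep.comp (fun _ x => if x ≤ 1 then x else 0) fun _ =>
      Measurable.ite measurableSet_Iic measurable_id measurable_const
  have hindi : ∀ i, IndepFun (xbar ξ i) (Wbari ξ i) ℙ := by
    intro i
    have h := (hxind.indepFun_finsetSum_of_notMem hxm (Finset.notMem_erase i Finset.univ)).symm
    convert! h using 1
    ext ω
    simp only [Wbari, Wbar, Finset.sum_apply]
    rw [← Finset.add_sum_erase _ _ (Finset.mem_univ i)]
    ring
  have hR2 := fun i => aux_R2 ℙ (xbar ξ i) (Wbari ξ i) (hxm i) (hWim i) (hindi i) (hx1 i)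
    (hxsq i) z
  obtain ⟨C, hC⟩ := aux_fz_bdd z
  obtain ⟨C', hC'⟩ := aux_fz'_bdd z
  have hfm := (aux_fz_cont z).measurable
  have hfI : ∀ i (g : Ω → ℝ), Measurable g → Integrable (fun ω => xbar ξ i ω * fz z (g ω)) :=
    fun i g hg => (hxI i).mul_bdd (c := C) (hfm.comp hg).aestronglyMeasurable
      (ae_of_all _ fun ω => (hC _).1)
  have hR2' : ∀ i, ∫ ω, xbar ξ i ω * (fz z (Wbar ξ ω) - fz z (Wbari ξ i ω))
      = (∫ ω, xbar ξ i ω * fz z (Wbar ξ ω))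
        - (∫ ω, xbar ξ i ω) * ∫ ω, fz z (Wbari ξ i ω) := by
    intro i
    simp_rw [mul_sub]
    rw [integral_sub (hfI i _ hWm) (hfI i _ (hWim i))]
    congr 1
    exact ((hindi i).comp measurable_id hfm).integral_fun_mul_eq_mul_integral
      (hxm i).aestronglyMeasurable (hfm.comp (hWim i)).aestronglyMeasurable
  have hT : ∀ i, ∫ t in Set.Iic (1 : ℝ),
      (∫ ω, (fz' z (Wbari ξ i ω + xbar ξ i ω) - fz' z (Wbari ξ i ω + t))) * Kbar ξ i t
      = (∫ ω, fz' z (Wbar ξ ω)) * (∫ ω, xbar ξ i ω ^ 2)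
        - ((∫ ω, xbar ξ i ω * fz z (Wbar ξ ω))
          - (∫ ω, xbar ξ i ω) * ∫ ω, fz z (Wbari ξ i ω)) := by
    intro i
    have h := hR2 i
    simp only [hadd] at h
    rw [hR2'] at h
    simp only [hadd]
    exact h
  have hS : ∫ ω, fz' z (Wbar ξ ω)
      = (∑ i, ∫ ω, xbar ξ i ω * fz z (Wbar ξ ω)) + ((ℙ {ω | Wbar ξ ω ≤ z}).toReal - Phi z) := by
    have hset : MeasurableSet {ω | Wbar ξ ω ≤ z} := measurableSet_le hWm measurable_const
    have e : (fun ω => fz' z (Wbar ξ ω)) = fun ω =>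
        (∑ i, xbar ξ i ω * fz z (Wbar ξ ω))
          + ({ω | Wbar ξ ω ≤ z}.indicator (fun _ => (1:ℝ)) ω - Phi z) := by
      ext ω
      rw [fz', ← Finset.sum_mul, ← Wbar.eq_1, Set.indicator]
      simp only [Set.mem_ofPred_eq]
      ring
    rw [e, integral_add, integral_sub, integral_finsetSum, integral_indicator hset]
    · simp [Measure.real]
    · exact fun i _ => hfI i _ hWm
    · exact (integrable_const _).indicator hset
    · exact integrable_const _
    · exact integrable_finsetSum _ fun i _ => hfI i _ hWm
    · exact ((integrable_const _).indicator hset).sub (integrable_const _)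
  simp_rw [hT, hmean', hvar']
  simp only [Finset.sum_sub_distrib, neg_mul, Finset.sum_neg_distrib, ← Finset.mul_sum]
  rw [hvar]
  linear_combination (-1 : ℝ) * hS
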